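/- Let D be a finite distributive bounded lattice and d₀ ∈ D an element with no complement, i.e. for every d ∈ D either d₀ ∧ d ≠ 0 or d₀ ∨ d ≠ 1. Let ⊢ be the entailment relation of D-valued lattice maps on the four-element lattice 2² = {(0,0),(0,1),(1,0),(1,1)}, and set X = {((0,0), 0_D), ((1,1), 1_D), ((0,1), d₀)}. Then: (a) for every d ∈ D the set X ∪ {((1,0), d)} is inconsistent, i.e. X ∪ {((1,0), d)} ⊢ ∅; and hence (b) X ⊢ ∅. -/

import Mathlib

/-- An entailment relation on a set `S`: a relation between finite subsets of `S`
satisfying reflexivity (R), monotonicity (M) and transitivity/cut (T). -/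
def IsEntailment {S : Type*} [DecidableEq S] (E : Finset S → Finset S → Prop) : Prop :=
  (∀ X Y : Finset S, (∃ x, x ∈ X ∧ x ∈ Y) → E X Y) ∧
  (∀ X X' Y Y' : Finset S, E X Y → E (X ∪ X') (Y ∪ Y')) ∧
  (∀ X Y : Finset S, ∀ z : S, E X (insert z Y) → E (insert z X) Y → E X Y)

variable (M : Type*) (D : Type*) [Lattice M] [BoundedOrder M] [Lattice D] [BoundedOrder D]
  [Fintype D] [DecidableEq M] [DecidableEq D]

/-- The generating axioms (s), (∧), (∨), (0), (1), (t) for the entailment relation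
of `D`-valued lattice maps on `M`. -/
def LatticeAxioms : Finset (M × D) → Finset (M × D) → Prop := fun X Y =>
  (∃ x a b, a ≠ b ∧ X = {(x, a), (x, b)} ∧ Y = ∅) ∨
  (∃ x y a b, X = {(x, a), (y, b)} ∧ Y = {(x ⊓ y, a ⊓ b)}) ∨
  (∃ x y a b, X = {(x, a), (y, b)} ∧ Y = {(x ⊔ y, a ⊔ b)}) ∨
  (X = ∅ ∧ Y = {((⊥ : M), (⊥ : D))}) ∨
  (X = ∅ ∧ Y = {((⊤ : M), (⊤ : D))}) ∨
  (∃ x : M, X = ∅ ∧ Y = Finset.univ.image (fun a : D => (x, a)))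

/-- The least entailment relation on `M × D` containing all the generating axioms:
the entailment relation of `D`-valued lattice maps on `M`. -/
def LatticeEntails (X Y : Finset (M × D)) : Prop :=
  ∀ E : Finset (M × D) → Finset (M × D) → Prop,
    IsEntailment E → (∀ X' Y', LatticeAxioms M D X' Y' → E X' Y') → E X Y

/-!
Lattice maps send complements to complements. Syntactically, if `y` is a complement of `x`, then
`(x, a)` and `(y, b)` entail both `(⊥, a ⊓ b)` and `(⊤, a ⊔ b)`, one of which clashes with
`(⊥, ⊥)` or `(⊤, ⊤)` unless `b` is a complement of `a`. If `a` has no complement, every value `b`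
at `y` is thus refuted; cutting with the totality axiom at `y` refutes `(x, a)` alone.
-/

theorem not_isCompl_iff_ne_or_ne {L : Type*} [Lattice L] [BoundedOrder L] {a b : L} :
    ¬ IsCompl a b ↔ a ⊓ b ≠ ⊥ ∨ a ⊔ b ≠ ⊤ := by
  rw [isCompl_iff, disjoint_iff, codisjoint_iff, not_and_or]

namespace IsEntailment

variable {S : Type*} [DecidableEq S] {E : Finset S → Finset S → Prop} {X X' Y Y' Z : Finset S}

theorem mono (hE : IsEntailment E) (h : E X Y) (hX : X ⊆ X') (hY : Y ⊆ Y') : E X' Y' := by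
  simpa only [Finset.union_eq_right.2 hX, Finset.union_eq_right.2 hY] using hE.2.1 X X' Y Y' h

theorem cut (hE : IsEntailment E) (h : E X Y) (hY : ∀ z ∈ Y, E (insert z X) Z) : E X Z := by
  have hYZ : E X (Y ∪ Z) := hE.mono h subset_rfl Finset.subset_union_left
  clear h
  induction Y using Finset.induction_on with
  | empty => rwa [Finset.empty_union] at hYZ
  | insert z Y _ ih =>
    rw [Finset.forall_mem_insert] at hY
    rw [Finset.insert_union] at hYZ
    have hz : E (insert z X) (Y ∪ Z) := hE.mono hY.1 subset_rfl Finset.subset_union_right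
    exact ih hY.2 (hE.2.2 X (Y ∪ Z) z hYZ hz)

end IsEntailment

namespace LatticeEntails

variable {M D}
variable {X X' Y Y' : Finset (M × D)} {x y : M} {a b : D}

theorem isEntailment : IsEntailment (LatticeEntails M D) :=
  ⟨fun X Y h _ hE _ => hE.1 X Y h,
    fun X X' Y Y' h E hE hA => hE.2.1 X X' Y Y' (h E hE hA),
    fun X Y z h h' E hE hA => hE.2.2 X Y z (h E hE hA) (h' E hE hA)⟩

theorem mono (h : LatticeEntails M D X Y) (hX : X ⊆ X') (hY : Y ⊆ Y') :
    LatticeEntails M D X' Y' :=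
  isEntailment.mono h hX hY

theorem of_latticeAxioms (h : LatticeAxioms M D X Y) : LatticeEntails M D X Y :=
  fun _ _ hA => hA X Y h

theorem pair_empty_of_ne (x : M) (hab : a ≠ b) : LatticeEntails M D {(x, a), (x, b)} ∅ :=
  of_latticeAxioms (.inl ⟨x, a, b, hab, rfl, rfl⟩)

theorem pair_inf (x y : M) (a b : D) : LatticeEntails M D {(x, a), (y, b)} {(x ⊓ y, a ⊓ b)} :=
  of_latticeAxioms (.inr (.inl ⟨x, y, a, b, rfl, rfl⟩))

theorem pair_sup (x y : M) (a b : D) : LatticeEntails M D {(x, a), (y, b)} {(x ⊔ y, a ⊔ b)} :=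
  of_latticeAxioms (.inr (.inr (.inl ⟨x, y, a, b, rfl, rfl⟩)))

theorem bot (X : Finset (M × D)) : LatticeEntails M D X {(⊥, ⊥)} :=
  (of_latticeAxioms (.inr (.inr (.inr (.inl ⟨rfl, rfl⟩))))).mono X.empty_subset subset_rfl

theorem top (X : Finset (M × D)) : LatticeEntails M D X {(⊤, ⊤)} :=
  (of_latticeAxioms (.inr (.inr (.inr (.inr (.inl ⟨rfl, rfl⟩)))))).mono X.empty_subset subset_rfl

theorem image_univ (X : Finset (M × D)) (x : M) :
    LatticeEntails M D X (Finset.univ.image fun a => (x, a)) :=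
  (of_latticeAxioms (.inr (.inr (.inr (.inr (.inr ⟨x, rfl, rfl⟩)))))).mono X.empty_subset subset_rfl

theorem empty_of_ne (hab : a ≠ b) (ha : LatticeEntails M D X {(x, a)})
    (hb : LatticeEntails M D X {(x, b)}) : LatticeEntails M D X ∅ := by
  refine isEntailment.cut ha fun _ hxa => ?_
  obtain rfl := Finset.mem_singleton.1 hxa
  refine isEntailment.cut (hb.mono (Finset.subset_insert _ X) subset_rfl) fun _ hxb => ?_
  obtain rfl := Finset.mem_singleton.1 hxb
  exact (pair_empty_of_ne x hab).mono (by grind) subset_rfl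

theorem pair_empty_of_not_isCompl (hxy : IsCompl x y) (hab : ¬ IsCompl a b) :
    LatticeEntails M D {(x, a), (y, b)} ∅ := by
  rcases not_isCompl_iff_ne_or_ne.1 hab with hinf | hsup
  · exact empty_of_ne hinf (hxy.inf_eq_bot ▸ pair_inf x y a b) (bot _)
  · exact empty_of_ne hsup (hxy.sup_eq_top ▸ pair_sup x y a b) (top _)

theorem singleton_empty_of_not_isComplemented (hx : IsComplemented x) (ha : ¬ IsComplemented a) :
    LatticeEntails M D {(x, a)} ∅ := by
  obtain ⟨y, hxy⟩ := hx
  refine isEntailment.cut (image_univ _ y) (Finset.forall_mem_image.2 fun b _ => ?_)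
  rw [Finset.pair_comm]
  exact pair_empty_of_not_isCompl hxy fun hab => ha ⟨b, hab⟩

end LatticeEntails

theorem stmt19_general {M D : Type*} [Lattice M] [BoundedOrder M] [Lattice D] [BoundedOrder D]
    [Fintype D] [DecidableEq M] [DecidableEq D] {x y : M} (hxy : IsCompl x y) {d₀ : D}
    (h : ¬ IsComplemented d₀) :
    (∀ d : D, LatticeEntails M D {(x, d₀), (y, d)} ∅) ∧ LatticeEntails M D {(x, d₀)} ∅ :=
  ⟨fun d => .pair_empty_of_not_isCompl hxy fun hd => h ⟨d, hd⟩,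
    .singleton_empty_of_not_isComplemented ⟨y, hxy⟩ h⟩

theorem stmt19 {D : Type*} [DistribLattice D] [BoundedOrder D] [Fintype D] [DecidableEq D]
    (d₀ : D) (h : ∀ d : D, d₀ ⊓ d ≠ ⊥ ∨ d₀ ⊔ d ≠ ⊤) :
    (∀ d : D, LatticeEntails (Bool × Bool) D
        (insert ((true, false), d)
          {((false, false), (⊥ : D)), ((true, true), (⊤ : D)), ((false, true), d₀)}) ∅) ∧
    LatticeEntails (Bool × Bool) D
      {((false, false), (⊥ : D)), ((true, true), (⊤ : D)), ((false, true), d₀)} ∅ := by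
  have hcompl : IsCompl ((false, true) : Bool × Bool) (true, false) :=
    Prod.isCompl_iff.2 ⟨isCompl_bot_top, isCompl_top_bot⟩
  have hgen := stmt19_general hcompl fun ⟨d, hd⟩ => not_isCompl_iff_ne_or_ne.2 (h d) hd
  exact ⟨fun d => (hgen.1 d).mono (by grind) subset_rfl, hgen.2.mono (by grind) subset_rfl⟩
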